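/- arXiv:1104.0707 — 2 statements merged into one kernel-verified Lean document; each statement's English description precedes it below -/
import Mathlib

section
/- Let G be a finite simple graph with maximum vertex degree Δ, and for a natural number q let P_G(q) denote the number of proper q-colorings of G (the number of functions from the vertices of G to a q-element set such that adjacent vertices receive different values). Then for every natural number q with q ≥ 10·Δ + 1, one has P_G(q−1)·P_G(q+1) ≤ P_G(q)². -/
open Polynomial in
/-- Counting functions subject to disequality constraints is polynomial in the number of colors. -/
theorem exists_count_poly {W : Type*} [Finite W] (r : W → W → Prop) :
    ∃ p : ℂ[X], ∀ q : ℕ, p.eval (q : ℂ) =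
      (Nat.card {f : W → Fin q // ∀ a b, r a b → f a ≠ f b} : ℂ) := by
  classical
  have : Fintype W := Fintype.ofFinite W
  have hfin : Finite (Setoid W) :=
    Finite.of_injective (fun s : Setoid W => (s.r : W → W → Prop)) (by
      intro s t h
      ext a b
      exact iff_of_eq (congrFun (congrFun h a) b))
  have : Fintype {s : Setoid W // ∀ a b, r a b → ¬ s a b} := Fintype.ofFinite _
  refine ⟨∑ s : {s : Setoid W // ∀ a b, r a b → ¬ s a b},
    descPochhammer ℂ (Fintype.card (Quotient s.1)), fun q => ?_⟩
  have hbij : Function.Bijective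
      (fun x : (Σ s : {s : Setoid W // ∀ a b, r a b → ¬ s a b}, (Quotient s.1 ↪ Fin q)) =>
        (⟨fun a => x.2 (Quotient.mk x.1.1 a), fun a b hab h =>
          x.1.2 a b hab (Quotient.exact (x.2.injective h))⟩ :
          {f : W → Fin q // ∀ a b, r a b → f a ≠ f b})) := by
    constructor
    · rintro ⟨⟨s, hs⟩, e⟩ ⟨⟨t, ht⟩, e'⟩ h
      have h' : ∀ a, e (Quotient.mk s a) = e' (Quotient.mk t a) := fun a =>
        congrFun (congrArg Subtype.val h) a
      have hst : s = t := by
        ext a b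
        constructor
        · intro hab
          have : Quotient.mk s a = Quotient.mk s b := Quotient.sound hab
          have h2 := h' a
          rw [this, h' b] at h2
          exact Quotient.exact (e'.injective h2.symm)
        · intro hab
          have : Quotient.mk t a = Quotient.mk t b := Quotient.sound hab
          have h2 := h' a
          rw [this, ← h' b] at h2
          exact Quotient.exact (e.injective h2)
      subst hst
      have : e = e' := by
        ext x
        induction x using Quotient.inductionOn with
        | h a => rw [h' a]
      subst this
      rfl
    · rintro ⟨f, hf⟩
      refine ⟨⟨⟨Setoid.ker f, fun a b hab h => hf a b hab h⟩,
        ⟨Setoid.kerLift f, Setoid.kerLift_injective f⟩⟩, ?_⟩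
      rfl
  rw [← Nat.card_congr (Equiv.ofBijective _ hbij), Nat.card_sigma, eval_finsetSum]
  push_cast
  refine Finset.sum_congr rfl fun s _ => ?_
  rw [descPochhammer_eval_eq_descFactorial, Nat.card_eq_fintype_card, Fintype.card_embedding_eq,
    Fintype.card_fin]

/-- Proper on `M`, and the extra vertex `none` is joined to `B`. -/
def RP {V : Type*} (G : SimpleGraph V) (M B : Finset V) {α : Type*} (f : Option V → α) : Prop :=
  (∀ x ∈ M, ∀ y ∈ M, G.Adj x y → f (some x) ≠ f (some y)) ∧ ∀ w ∈ B, f (some w) ≠ f none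

open Classical in
/-- The number of colorings satisfying `RP`. -/
noncomputable def RC {V : Type*} [Fintype V] (G : SimpleGraph V) (M B : Finset V) (q : ℕ) : ℕ :=
  (Finset.univ.filter fun f : Option V → Fin q => RP G M B f).card

open Polynomial in
theorem exists_RC_poly {V : Type*} [Fintype V] (G : SimpleGraph V) (M B : Finset V) :
    ∃ p : ℂ[X], ∀ q : ℕ, p.eval (q : ℂ) = (RC G M B q : ℂ) := by
  classical
  obtain ⟨p, hp⟩ := exists_count_poly (W := Option V) (fun a b =>
    (∃ x ∈ M, ∃ y ∈ M, G.Adj x y ∧ a = some x ∧ b = some y) ∨ (∃ w ∈ B, a = some w ∧ b = none))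
  refine ⟨p, fun q => ?_⟩
  rw [hp, RC, ← Fintype.card_subtype, Nat.card_eq_fintype_card]
  congr 1
  refine Fintype.card_congr (Equiv.subtypeEquivRight fun f => ?_)
  unfold RP
  constructor
  · intro h
    exact ⟨fun x hx y hy hxy => h _ _ (Or.inl ⟨x, hx, y, hy, hxy, rfl, rfl⟩),
      fun w hw => h _ _ (Or.inr ⟨w, hw, rfl, rfl⟩)⟩
  · rintro ⟨h1, h2⟩ a b (⟨x, hx, y, hy, hxy, rfl, rfl⟩ | ⟨w, hw, rfl, rfl⟩)
    · exact h1 x hx y hy hxy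
    · exact h2 w hw

theorem RC_swap {V : Type*} [Fintype V] [DecidableEq V] (G : SimpleGraph V) [DecidableRel G.Adj]
    (M : Finset V) (u : V) (hu : u ∈ M) (q : ℕ) :
    RC G M ∅ q = RC G (M.erase u) (M.filter (G.Adj u)) q := by
  classical
  unfold RC
  have key : ∀ f : Option V → Fin q, RP G M ∅ f ↔
      RP G (M.erase u) (M.filter (G.Adj u)) (f ∘ Equiv.swap none (some u)) := by
    intro f
    have e1 : ∀ x, x ≠ u → Equiv.swap none (some u) (some x) = some x := fun x hx =>
      Equiv.swap_apply_of_ne_of_ne (by simp) (by simpa using hx)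
    unfold RP
    constructor
    · rintro ⟨h1, -⟩
      refine ⟨?_, ?_⟩
      · intro x hx y hy hxy
        rw [Finset.mem_erase] at hx hy
        simp only [Function.comp, e1 x hx.1, e1 y hy.1]
        exact h1 x hx.2 y hy.2 hxy
      · intro w hw
        rw [Finset.mem_filter] at hw
        simp only [Function.comp, e1 w hw.2.ne', Equiv.swap_apply_left]
        exact h1 w hw.1 u hu hw.2.symm
    · rintro ⟨h1, h2⟩
      refine ⟨?_, by simp⟩
      intro x hx y hy hxy
      by_cases hxu : x = u
      · subst hxu
        have := h2 y (by simp [hy, hxy])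
        simp only [Function.comp, e1 y hxy.ne', Equiv.swap_apply_left] at this
        exact this.symm
      · by_cases hyu : y = u
        · subst hyu
          have := h2 x (by simp [hx, hxy.symm])
          simpa only [Function.comp, e1 x hxu, Equiv.swap_apply_left] using this
        · have := h1 x (by simp [hx, hxu]) y (by simp [hy, hyu]) hxy
          simpa only [Function.comp, e1 x hxu, e1 y hyu] using this
  refine Finset.card_nbij' (fun f => f ∘ Equiv.swap none (some u))
    (fun f => f ∘ Equiv.swap none (some u)) ?_ ?_ ?_ ?_
  · intro f hf
    simpa using (key f).1 (by simpa using hf)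
  · intro f hf
    have := (key (f ∘ Equiv.swap none (some u))).2 (by
      have e : (f ∘ Equiv.swap none (some u)) ∘ Equiv.swap none (some u) = f := by
        ext x; simp
      rw [e]; simpa using hf)
    simpa using this
  · intro f _
    ext x; simp
  · intro f _
    ext x; simp

theorem RC_rec {V : Type*} [Fintype V] [DecidableEq V] (G : SimpleGraph V) [DecidableRel G.Adj]
    (M B : Finset V) (u : V) (hu : u ∈ M) (huB : u ∉ B) (q : ℕ) :
    q * RC G M B q = q * RC G M (insert u B) q +
      RC G (M.erase u) (B ∪ M.filter (G.Adj u)) q := by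
  classical
  have h1 : RC G M B q = RC G M (insert u B) q + (Finset.univ.filter
      fun f : Option V → Fin q => RP G M B f ∧ f (some u) = f none).card := by
    unfold RC
    rw [← Finset.card_filter_add_card_filter_not (fun f : Option V → Fin q => f (some u) ≠ f none),
      Finset.filter_filter, Finset.filter_filter]
    congr 2
    · ext f
      simp only [Finset.mem_filter, Finset.mem_univ, true_and]
      simp only [RP, Finset.forall_mem_insert]
      tauto
    · ext f
      simp
  have h2 : RC G (M.erase u) (B ∪ M.filter (G.Adj u)) q = q * (Finset.univ.filter
      fun f : Option V → Fin q => RP G M B f ∧ f (some u) = f none).card := by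
    have hprod := Finset.card_product (Finset.univ.filter
      fun f : Option V → Fin q => RP G M B f ∧ f (some u) = f none) (Finset.univ : Finset (Fin q))
    rw [Finset.card_univ, Fintype.card_fin, mul_comm] at hprod
    rw [← hprod]
    unfold RC
    symm
    refine Finset.card_nbij' (fun x => Function.update x.1 (some u) x.2)
      (fun g => (Function.update g (some u) (g none), g (some u))) ?_ ?_ ?_ ?_
    · rintro ⟨f, c⟩ hf
      simp only [Finset.coe_product, Finset.coe_filter, Finset.mem_univ, true_and, Finset.coe_univ,
        Set.mem_prod, Set.mem_ofPred_eq, Set.mem_univ, and_true] at hf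
      obtain ⟨⟨ha, hb⟩, hc⟩ := hf
      simp only [Finset.coe_filter, Finset.mem_univ, true_and, Set.mem_ofPred_eq]
      refine ⟨?_, ?_⟩
      · intro x hx y hy hxy
        rw [Finset.mem_erase] at hx hy
        simpa [Function.update, hx.1, hy.1] using ha x hx.2 y hy.2 hxy
      · intro w hw
        rw [Finset.mem_union, Finset.mem_filter] at hw
        rcases hw with hw | hw
        · have hwu : w ≠ u := fun h => huB (h ▸ hw)
          simpa [Function.update, hwu] using hb w hw
        · have hwu : w ≠ u := hw.2.ne'
          have := ha w hw.1 u hu hw.2.symm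
          rw [hc] at this
          simpa [Function.update, hwu] using this
    · intro g hg
      simp only [Finset.coe_filter, Finset.mem_univ, true_and, Set.mem_ofPred_eq] at hg
      obtain ⟨ha, hb⟩ := hg
      simp only [Finset.coe_product, Finset.coe_filter, Finset.mem_univ, true_and, Finset.coe_univ,
        Set.mem_prod, Set.mem_ofPred_eq, Set.mem_univ, and_true]
      refine ⟨⟨?_, ?_⟩, by simp⟩
      · intro x hx y hy hxy
        by_cases hxu : x = u
        · subst hxu
          have := hb y (by simp [hy, hxy])
          simpa [Function.update, hxy.ne'] using this.symm
        · by_cases hyu : y = u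
          · subst hyu
            have := hb x (by simp [hx, hxy.symm])
            simpa [Function.update, hxu] using this
          · have := ha x (by simp [hx, hxu]) y (by simp [hy, hyu]) hxy
            simpa [Function.update, hxu, hyu] using this
      · intro w hw
        have hwu : w ≠ u := fun h => huB (h ▸ hw)
        have := hb w (by simp [hw])
        simpa [Function.update, hwu] using this
    · rintro ⟨f, c⟩ hf
      simp only [Finset.coe_product, Finset.coe_filter, Finset.mem_univ, true_and, Finset.coe_univ,
        Set.mem_prod, Set.mem_ofPred_eq, Set.mem_univ, and_true] at hf
      obtain ⟨-, hc⟩ := hf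
      simp [← hc]
    · intro g _
      simp
  rw [h1, h2, mul_add]

theorem RC_empty {V : Type*} [Fintype V] (G : SimpleGraph V) (q : ℕ) :
    RC G ∅ ∅ q = q ^ (Fintype.card V + 1) := by
  classical
  simp [RC, RP]

theorem RC_univ {V : Type*} [Fintype V] (G : SimpleGraph V) (q : ℕ) :
    RC G Finset.univ ∅ q =
      q * Nat.card {f : V → Fin q // ∀ a b, G.Adj a b → f a ≠ f b} := by
  classical
  have hprod := Fintype.card_prod (Fin q) {f : V → Fin q // ∀ a b, G.Adj a b → f a ≠ f b}
  rw [Fintype.card_fin] at hprod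
  rw [Nat.card_eq_fintype_card, ← hprod, RC, ← Fintype.card_subtype]
  refine Fintype.card_congr ⟨fun f => (f.1 none, ⟨fun x => f.1 (some x), fun a b hab =>
    f.2.1 a (Finset.mem_univ _) b (Finset.mem_univ _) hab⟩), fun x => ⟨fun o => o.elim x.1 x.2.1,
    fun a _ b _ hab => x.2.2 a b hab, by simp⟩, ?_, ?_⟩
  · rintro ⟨f, hf⟩
    ext o
    cases o <;> rfl
  · rintro ⟨c, f, hf⟩
    rfl

open Polynomial in
theorem poly_eq_of_nat (p r : ℂ[X]) (h : ∀ q : ℕ, p.eval (q : ℂ) = r.eval (q : ℂ)) : p = r := by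
  apply eq_of_infinite_eval_eq
  exact (Set.infinite_range_of_injective (Nat.cast_injective (R := ℂ))).mono (by
    rintro _ ⟨q, rfl⟩
    exact h q)

/-- Analytic core: abstract induction giving zero-freeness. -/
theorem zero_free {V : Type*} [Fintype V] [DecidableEq V] (G : SimpleGraph V) [DecidableRel G.Adj]
    (R : Finset V → Finset V → ℂ) (z : ℂ) (s : ℝ) (hs1 : 1 ≤ s) (hz : z ≠ 0)
    (hs : s = 1 + 7 / 3 / ‖z‖)
    (hsD : s ^ G.maxDegree ≤ 7 / 5)
    (h0 : R ∅ ∅ ≠ 0)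
    (hswap : ∀ M, ∀ u ∈ M, R M ∅ = R (M.erase u) (M.filter (G.Adj u)))
    (hrec : ∀ M B, ∀ u ∈ M, u ∉ B →
      z * R M B = z * R M (insert u B) + R (M.erase u) (B ∪ M.filter (G.Adj u)))
    (n : ℕ) : ∀ M : Finset V, M.card = n →
      R M ∅ ≠ 0 ∧ ∀ B ⊆ M, ‖R M B / R M ∅ - 1‖ ≤ s ^ B.card - 1 := by
  have hzp : 0 < ‖z‖ := norm_pos_iff.2 hz
  have hdeg : ∀ (M : Finset V) (u : V), (M.filter (G.Adj u)).card ≤ G.maxDegree := by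
    intro M u
    refine le_trans (Finset.card_le_card ?_) (G.degree_le_maxDegree u)
    intro x hx
    simpa using (Finset.mem_filter.1 hx).2
  have hsub : ∀ (M : Finset V) (u : V), M.filter (G.Adj u) ⊆ M.erase u := by
    intro M u x hx
    rw [Finset.mem_filter] at hx
    exact Finset.mem_erase.2 ⟨hx.2.ne', hx.1⟩
  induction n with
  | zero =>
    intro M hM
    rw [Finset.card_eq_zero] at hM
    subst hM
    refine ⟨h0, fun B hB => ?_⟩
    rw [Finset.subset_empty] at hB
    subst hB
    simp [h0]
  | succ n ih =>
    intro M hM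
    have hstep : ∀ u ∈ M, 3 / 5 * ‖R (M.erase u) ∅‖ ≤ ‖R M ∅‖ ∧ R (M.erase u) ∅ ≠ 0 ∧
        ∀ B ⊆ M.erase u, ‖R (M.erase u) B‖ ≤ s ^ B.card * ‖R (M.erase u) ∅‖ := by
      intro u hu
      obtain ⟨hne, hb⟩ := ih (M.erase u) (by rw [Finset.card_erase_of_mem hu, hM]; rfl)
      have hp : 0 < ‖R (M.erase u) ∅‖ := norm_pos_iff.2 hne
      refine ⟨?_, hne, ?_⟩
      · rw [hswap M u hu]
        have h1 := hb _ (hsub M u)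
        have h2 : s ^ (M.filter (G.Adj u)).card ≤ 7 / 5 :=
          (pow_le_pow_right₀ hs1 (hdeg M u)).trans hsD
        have h3 := norm_sub_norm_le (1 : ℂ) (1 - R (M.erase u) (M.filter (G.Adj u)) /
          R (M.erase u) ∅)
        rw [norm_sub_rev (1 : ℂ) (_ / _), norm_one, sub_sub_cancel, norm_div] at h3
        rw [← le_div_iff₀ hp]
        linarith
      · intro B hB
        have h1 := hb B hB
        have h3 := norm_add_le (R (M.erase u) B / R (M.erase u) ∅ - 1) 1
        rw [sub_add_cancel, norm_one, norm_div] at h3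
        rw [← div_le_iff₀ hp]
        linarith
    have hne : R M ∅ ≠ 0 := by
      obtain ⟨u, hu⟩ : M.Nonempty := by rw [← Finset.card_pos]; omega
      obtain ⟨h1, h2, -⟩ := hstep u hu
      have := norm_pos_iff.2 h2
      exact norm_pos_iff.1 (by linarith)
    refine ⟨hne, fun B => ?_⟩
    have hp : 0 < ‖R M ∅‖ := norm_pos_iff.2 hne
    induction B using Finset.induction_on with
    | empty => intro _; simp [hne]
    | insert u B huB ihB =>
      intro hB
      rw [Finset.insert_subset_iff] at hB
      obtain ⟨hu, hBM⟩ := hB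
      have ih1 := ihB hBM
      obtain ⟨h1, h2, h3⟩ := hstep u hu
      have hB' : B ∪ M.filter (G.Adj u) ⊆ M.erase u := by
        refine Finset.union_subset ?_ (hsub M u)
        intro x hx
        exact Finset.mem_erase.2 ⟨fun h => huB (h ▸ hx), hBM hx⟩
      have h4 := h3 _ hB'
      have h5 : s ^ (B ∪ M.filter (G.Adj u)).card ≤ s ^ B.card * (7 / 5) := by
        calc s ^ (B ∪ M.filter (G.Adj u)).card ≤ s ^ (B.card + G.maxDegree) :=
              pow_le_pow_right₀ hs1 ((Finset.card_union_le _ _).trans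
                (Nat.add_le_add_left (hdeg M u) _))
          _ = s ^ B.card * s ^ G.maxDegree := pow_add _ _ _
          _ ≤ _ := by gcongr
      have h6 : R M (insert u B) / R M ∅ - 1 = (R M B / R M ∅ - 1) -
          R (M.erase u) (B ∪ M.filter (G.Adj u)) / (z * R M ∅) := by
        have := hrec M B u hu huB
        field_simp
        linear_combination -this
      have h7 : ‖R (M.erase u) (B ∪ M.filter (G.Adj u)) / (z * R M ∅)‖ ≤
          s ^ B.card * (7 / 3 / ‖z‖) := by
        rw [norm_div, norm_mul, div_le_iff₀ (by positivity)]
        have h8 : s ^ B.card * (7 / 3 / ‖z‖) * (‖z‖ * ‖R M ∅‖) =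
            s ^ B.card * (7 / 3) * ‖R M ∅‖ := by
          field_simp
        rw [h8]
        have hsp : 0 ≤ s ^ B.card := by positivity
        calc _ ≤ _ := h4
          _ ≤ s ^ B.card * (7 / 5) * ‖R (M.erase u) ∅‖ := by gcongr
          _ = s ^ B.card * (7 / 3) * (3 / 5 * ‖R (M.erase u) ∅‖) := by ring
          _ ≤ _ := by gcongr
      rw [h6, Finset.card_insert_of_notMem huB]
      have h9 : s ^ (B.card + 1) = s ^ B.card + s ^ B.card * (7 / 3 / ‖z‖) := by
        rw [pow_succ]
        nth_rw 2 [hs]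
        ring
      rw [h9]
      have := norm_sub_le (R M B / R M ∅ - 1)
        (R (M.erase u) (B ∪ M.filter (G.Adj u)) / (z * R M ∅))
      linarith

theorem exp_third_le : Real.exp (1 / 3) ≤ 7 / 5 := by
  have h : Real.exp (1 / 3) ^ 3 ≤ (7 / 5 : ℝ) ^ 3 := by
    rw [← Real.exp_nat_mul]
    have := Real.exp_one_lt_d9
    norm_num at this ⊢
    linarith
  exact le_of_pow_le_pow_left₀ (by norm_num) (by norm_num) h

open Polynomial in
theorem roots_bound {V : Type*} [Fintype V] (G : SimpleGraph V) [DecidableRel G.Adj]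
    (p : ℂ[X]) (hp : ∀ q : ℕ, p.eval (q : ℂ) =
      (Nat.card {f : V → Fin q // ∀ a b, G.Adj a b → f a ≠ f b} : ℂ))
    (z : ℂ) (hroot : p.eval z = 0) : ‖z‖ ≤ 7 * G.maxDegree := by
  classical
  by_contra! hlt
  have hzp : 0 < ‖z‖ := lt_of_le_of_lt (by positivity) hlt
  have hz : z ≠ 0 := norm_pos_iff.1 hzp
  choose P hP using fun M B => exists_RC_poly G M B
  have hmain := zero_free G (fun M B => (P M B).eval z) z (1 + 7 / 3 / ‖z‖)
    (by have : 0 ≤ 7 / 3 / ‖z‖ := by positivity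
        linarith) hz rfl
    (by
      calc (1 + 7 / 3 / ‖z‖) ^ G.maxDegree ≤ (Real.exp (7 / 3 / ‖z‖)) ^ G.maxDegree := by
            gcongr
            have := Real.add_one_le_exp (7 / 3 / ‖z‖)
            linarith
        _ = Real.exp (G.maxDegree * (7 / 3 / ‖z‖)) := by rw [Real.exp_nat_mul]
        _ ≤ Real.exp (1 / 3) := by
            apply Real.exp_le_exp.2
            rw [← mul_div_assoc, div_le_iff₀ hzp]
            linarith
        _ ≤ _ := exp_third_le)
    (by
      have : P ∅ ∅ = X ^ (Fintype.card V + 1) := poly_eq_of_nat _ _ fun q => by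
        rw [hP, RC_empty]; simp
      simp [this, hz])
    (by
      intro M u hu
      have : P M ∅ = P (M.erase u) (M.filter (G.Adj u)) := poly_eq_of_nat _ _ fun q => by
        rw [hP, hP, RC_swap G M u hu]
      simp only [this])
    (by
      intro M B u hu huB
      have : X * P M B = X * P M (insert u B) + P (M.erase u) (B ∪ M.filter (G.Adj u)) :=
        poly_eq_of_nat _ _ fun q => by
          simp only [eval_add, eval_mul, eval_X, hP]
          exact_mod_cast RC_rec G M B u hu huB q
      have h := congrArg (eval z) this
      simpa using h)
    _ Finset.univ rfl
  apply hmain.1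
  have : P Finset.univ ∅ = X * p := poly_eq_of_nat _ _ fun q => by
    rw [eval_mul, hP, hp, RC_univ]; simp
  simp [this, hroot]

theorem factor_bound (D x : ℝ) (hD : 0 ≤ D) (hx : 10 * D + 1 ≤ x) (z : ℂ) (hz : ‖z‖ ≤ 7 * D) :
    ‖((x - 1 : ℝ) : ℂ) - z‖ * ‖((x + 1 : ℝ) : ℂ) - z‖ ≤ ‖(x : ℂ) - z‖ ^ 2 := by
  have h1 : ∀ t : ℝ, ‖(t : ℂ) - z‖ ^ 2 = (t - z.re) ^ 2 + z.im ^ 2 := by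
    intro t
    rw [← Complex.normSq_eq_norm_sq, Complex.normSq_apply]
    simp
    ring
  have h2 : z.re ^ 2 + z.im ^ 2 ≤ 49 * D ^ 2 := by
    have h : ‖z‖ ^ 2 = z.re ^ 2 + z.im ^ 2 := by
      rw [← Complex.normSq_eq_norm_sq, Complex.normSq_apply]; ring
    rw [← h]
    have := pow_le_pow_left₀ (norm_nonneg z) hz 2
    nlinarith
  refine le_of_pow_le_pow_left₀ (n := 2) (by norm_num) (by positivity) ?_
  rw [mul_pow, h1, h1, h1]
  have h3 : 1 / 2 ≤ (x - z.re) ^ 2 - z.im ^ 2 := by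
    nlinarith [sq_nonneg (x - 2 * z.re)]
  nlinarith

/-- For a finite simple graph `G` with maximum degree `Δ`, the number of proper
`q`-colorings `P_G(q)` satisfies `P_G(q-1) * P_G(q+1) ≤ P_G(q)^2` for all `q ≥ 10*Δ + 1`. -/
theorem chromatic_log_concave_above_ten_maxDegree
    {V : Type*} [Fintype V] (G : SimpleGraph V) [DecidableRel G.Adj]
    (q : ℕ) (hq : 10 * G.maxDegree + 1 ≤ q) :
    Fintype.card (G.Coloring (Fin (q - 1))) * Fintype.card (G.Coloring (Fin (q + 1))) ≤
      Fintype.card (G.Coloring (Fin q)) ^ 2 := by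
  obtain ⟨p, hp⟩ := exists_count_poly G.Adj
  have hcard : ∀ k : ℕ, ‖p.eval (k : ℂ)‖ = (Fintype.card (G.Coloring (Fin k)) : ℝ) := by
    intro k
    rw [hp, Complex.norm_natCast, ← Nat.card_eq_fintype_card]
    congr 1
    exact Nat.card_congr ⟨fun f => SimpleGraph.Coloring.mk f.1 (fun {a b} h => f.2 a b h),
      fun c => ⟨c, fun a b h => c.valid h⟩, fun f => rfl, fun c => rfl⟩
  have heval : ∀ x : ℂ, ‖p.eval x‖ =
      ‖p.leadingCoeff‖ * (p.roots.map fun a => ‖x - a‖).prod := by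
    intro x
    rw [(IsAlgClosed.splits p).eval_eq_prod_roots, norm_mul]
    congr 1
    have := map_multiset_prod (normHom : ℂ →*₀ ℝ) (p.roots.map fun a => x - a)
    rw [Multiset.map_map] at this
    exact this
  have hreal : (Fintype.card (G.Coloring (Fin (q - 1))) : ℝ) *
      Fintype.card (G.Coloring (Fin (q + 1))) ≤ (Fintype.card (G.Coloring (Fin q)) : ℝ) ^ 2 := by
    rw [← hcard, ← hcard, ← hcard, heval, heval, heval, mul_mul_mul_comm, mul_pow, ← pow_two,
      ← Multiset.prod_map_mul, ← Multiset.prod_map_pow]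
    refine mul_le_mul_of_nonneg_left ?_ (by positivity)
    refine Multiset.prod_map_le_prod_map₀ _ _ (fun a _ => by positivity) fun a ha => ?_
    have hroot : p.eval a = 0 := (Polynomial.mem_roots'.1 ha).2
    have hb := roots_bound G p hp a hroot
    have := factor_bound G.maxDegree q (by positivity) (by exact_mod_cast hq) a hb
    have hq1 : 1 ≤ q := by omega
    push_cast [Nat.cast_sub hq1] at this ⊢
    exact this
  exact_mod_cast hreal
end

section
/- For every real constant c < 1, there exist a finite simple graph G and a natural number q with q ≥ c·Δ(G) + 1 such that P_G(q−1)·P_G(q+1) > P_G(q)². Hence in the statement 'P_G is log-concave for all integers q ≥ C·Δ(G) + 1' the constant C cannot be taken smaller than 1. -/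
namespace LCC

/-- First label of the `k`-th blob. -/
def iot : Fin 5 → Fin 3 := ![0, 0, 1, 1, 2]

/-- Second label of the `k`-th blob. -/
def T (k : Fin 5) : Finset (Fin 5) := {k, k + 1}

/-- Vertices: a `3 × 5` grid and five blobs of size `n`. -/
abbrev Vt (n : ℕ) : Type := (Fin 3 × Fin 5) ⊕ (Fin 5 × Fin n)

/-- Row label. -/
def labA {n : ℕ} : Vt n → Fin 3
  | Sum.inl p => p.1
  | Sum.inr p => iot p.1

/-- Column-set label. -/
def labB {n : ℕ} : Vt n → Finset (Fin 5)
  | Sum.inl p => {p.2}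
  | Sum.inr p => T p.1

/-- The base graph. -/
def H (n : ℕ) : SimpleGraph (Vt n) where
  Adj u v := labA u ≠ labA v ∧ Disjoint (labB u) (labB v)
  symm := ⟨fun _ _ h => ⟨h.1.symm, h.2.symm⟩⟩
  loopless := ⟨fun _ h => h.1 rfl⟩

lemma indep_bound : ∀ g : Fin 5 → Bool,
    (∀ k l, Disjoint (T k) (T l) → ¬ (g k = true ∧ g l = true)) →
    ∏ k, (if g k = true then 2 else 1) ≤ 4 := by
  decide

lemma T_facts : ∀ k l, Disjoint (T k) (T l) → iot k ≠ iot l := by decide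

lemma structure_bound (f : Fin 3 → Fin 5 → Fin 4)
    (hf : ∀ i i' j j', i ≠ i' → j ≠ j' → f i j ≠ f i' j')
    (S : Fin 5 → Finset (Fin 4))
    (hS : ∀ k c i j, c ∈ S k → i ≠ iot k → j ∉ T k → f i j ≠ c) :
    ∃ c, ∀ k, ((S k).erase c).card ≤ 1 := by
  have h1 : ∀ i, ∃ c j j', j ≠ j' ∧ f i j = c ∧ f i j' = c := by
    intro i
    obtain ⟨j, j', h, h'⟩ := Fintype.exists_ne_map_eq_of_card_lt (f i) (by simp)
    exact ⟨f i j, j, j', h, rfl, h'.symm⟩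
  choose r p p' hpp hp hp' using h1
  -- the colour `r i` occurs only in row `i`
  have hrow : ∀ i i' j, f i' j = r i → i' = i := by
    intro i i' j h
    by_contra hne
    by_cases hj : j = p i
    · exact hf i' i j (p' i) hne (by rw [hj]; exact hpp i) (h.trans (hp' i).symm)
    · exact hf i' i j (p i) hne hj (h.trans (hp i).symm)
  have hinj : Function.Injective r := by
    intro i i' h
    exact hrow i' i (p i) ((hp i).trans h)
  obtain ⟨e, he⟩ : ∃ e, ∀ c, c ≠ e → ∃ i, r i = c := by
    have hc : (Finset.univ.image r).card = 3 := by
      rw [Finset.card_image_of_injective _ hinj]; simp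
    have hc2 : (Finset.univ.image r)ᶜ.card = 1 := by
      rw [Finset.card_compl, hc]; simp
    obtain ⟨e, he⟩ := Finset.card_eq_one.1 hc2
    refine ⟨e, fun c hce => ?_⟩
    by_contra hno
    have : c ∈ (Finset.univ.image r)ᶜ := by
      simpa using hno
    rw [he] at this
    exact hce (by simpa using this)
  have hcell : ∀ i j, f i j ≠ e → f i j = r i := by
    intro i j h
    obtain ⟨i', hi'⟩ := he _ h
    have := hrow i' i j hi'.symm
    rw [← hi', this]
  have hthree : ∀ k : Fin 5, ∀ l, ∃ j, j ∉ T k ∧ j ∉ T l := by decide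
  have htwo : ∀ k : Fin 5, ∀ j, ∃ j', j' ∉ T k ∧ j' ≠ j := by decide
  by_cases hcase : ∀ k i, r i ∈ S k → i = iot k
  · refine ⟨e, fun k => ?_⟩
    rw [Finset.card_le_one]
    intro a ha b hb
    rw [Finset.mem_erase] at ha hb
    obtain ⟨i, rfl⟩ := he a ha.1
    obtain ⟨i', rfl⟩ := he b hb.1
    rw [hcase k i ha.2, hcase k i' hb.2]
  · push Not at hcase
    obtain ⟨k, i, hk, hik⟩ := hcase
    have hE : ∀ j, j ∉ T k → f i j = e := by
      intro j hj
      by_contra hne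
      exact hS k _ i j hk hik hj (hcell i j hne)
    -- `e` lives only in row `i`
    have hEr : ∀ i' j, f i' j = e → i' = i := by
      intro i' j h
      by_contra hne
      obtain ⟨j', h1, h2⟩ : ∃ j', j' ∉ T k ∧ j' ≠ j := by
        exact htwo k j
      exact hf i' i j j' hne h2.symm (h.trans (hE j' h1).symm)
    refine ⟨r i, fun l => ?_⟩
    have key : ∀ c ∈ (S l).erase (r i), c = if iot l = i then e else r (iot l) := by
      intro c hc
      rw [Finset.mem_erase] at hc
      by_cases hce : c = e
      · have : iot l = i := by
          by_contra hne
          obtain ⟨j, h1, h2⟩ := hthree k l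
          exact hS l c i j hc.2 (Ne.symm hne) h2 ((hE j h1).trans hce.symm)
        rw [if_pos this, hce]
      · obtain ⟨i', rfl⟩ := he c hce
        have hii : i' ≠ i := fun h => hc.1 (by rw [h])
        have : iot l = i' := by
          by_contra hne
          obtain ⟨j, h1, h2⟩ := hthree k l
          refine hS l _ i' j hc.2 (Ne.symm hne) h2 (hcell i' j ?_)
          exact fun h => hii (hEr i' j h)
        rw [if_neg (by rw [this]; exact hii), this]
    rw [Finset.card_le_one]
    intro a ha b hb
    rw [key a ha, key b hb]

lemma prod_bound (f : Fin 3 → Fin 5 → Fin 4)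
    (hf : ∀ i i' j j', i ≠ i' → j ≠ j' → f i j ≠ f i' j')
    (S : Fin 5 → Finset (Fin 4))
    (hS : ∀ k c i j, c ∈ S k → i ≠ iot k → j ∉ T k → f i j ≠ c)
    (hd : ∀ k l c, Disjoint (T k) (T l) → c ∈ S k → c ∉ S l) :
    ∏ k, (S k).card ≤ 4 := by
  obtain ⟨c, hc⟩ := structure_bound f hf S hS
  refine le_trans ?_ (indep_bound (fun k => decide (c ∈ S k)) ?_)
  · refine Finset.prod_le_prod' fun k _ => ?_
    have := hc k
    by_cases h : c ∈ S k
    · rw [Finset.card_erase_of_mem h] at this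
      simp only [h, decide_true, if_true]; omega
    · rw [Finset.erase_eq_of_notMem h] at this
      simpa [h] using this
  · intro k l hkl h
    simp only [decide_eq_true_eq] at h
    exact hd k l c hkl h.1 h.2

/-- The colours used on each blob. -/
def used {n : ℕ} (C : (H n).Coloring (Fin 4)) (k : Fin 5) : Finset (Fin 4) :=
  Finset.univ.image fun m => C (Sum.inr (k, m))

lemma used_bound {n : ℕ} (C : (H n).Coloring (Fin 4)) : ∏ k, (used C k).card ≤ 4 := by
  apply prod_bound (fun i j => C (Sum.inl (i, j)))
  · intro i i' j j' hi hj
    exact C.valid ⟨hi, by simpa [labB] using hj⟩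
  · intro k c i j hc hi hj
    simp only [used, Finset.mem_image, Finset.mem_univ, true_and] at hc
    obtain ⟨m, rfl⟩ := hc
    exact C.valid ⟨hi, by simpa [labB] using hj⟩
  · intro k l c hkl hk hl
    simp only [used, Finset.mem_image, Finset.mem_univ, true_and] at hk hl
    obtain ⟨m, rfl⟩ := hk
    obtain ⟨m', h⟩ := hl
    exact C.valid (v := Sum.inr (l, m')) (w := Sum.inr (k, m))
      ⟨(T_facts k l hkl).symm, hkl.symm⟩ h

instance colFin {V : Type} [Finite V] (G : SimpleGraph V) (q : ℕ) :
    Finite (G.Coloring (Fin q)) :=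
  Finite.of_injective (fun C : G.Coloring (Fin q) => (C : V → Fin q)) DFunLike.coe_injective

lemma param_card : (Finset.univ : Finset ((Fin 3 × Fin 5 → Fin 4) ×
    (Fin 5 → Finset (Fin 4)))).card ≤ 2 ^ 50 := by
  rw [Finset.card_univ, Fintype.card_prod, Fintype.card_fun, Fintype.card_fun,
    Fintype.card_finset, Fintype.card_prod, Fintype.card_fin, Fintype.card_fin, Fintype.card_fin]
  norm_num

set_option linter.constructorNameAsVariable false in
lemma upper (n : ℕ) : Nat.card ((H n).Coloring (Fin 4)) ≤ 2 ^ 50 * 4 ^ n := by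
  classical
  -- parametrising set
  let Φ : (H n).Coloring (Fin 4) →
      ((Fin 3 × Fin 5 → Fin 4) × (Fin 5 → Finset (Fin 4))) × (Fin 5 → Fin n → Fin 4) :=
    fun C => ((fun p => C (Sum.inl p), used C), fun k m => C (Sum.inr (k, m)))
  have hΦ : Function.Injective Φ := by
    intro C D h
    simp only [Φ, Prod.mk.injEq] at h
    apply DFunLike.ext
    rintro (p | ⟨k, m⟩)
    · exact congrFun h.1.1 p
    · exact congrFun (congrFun h.2 k) m
  let A : Finset ((Fin 3 × Fin 5 → Fin 4) × (Fin 5 → Finset (Fin 4))) :=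
    Finset.univ.filter fun p => ∏ k, (p.2 k).card ≤ 4
  let F : (Fin 3 × Fin 5 → Fin 4) × (Fin 5 → Finset (Fin 4)) →
      Finset (Fin 5 → Fin n → Fin 4) :=
    fun p => Fintype.piFinset fun k => Fintype.piFinset fun _ => p.2 k
  let B := A.sigma F
  let Ψ : (H n).Coloring (Fin 4) → {x // x ∈ B} := fun C =>
    ⟨⟨(Φ C).1, (Φ C).2⟩, by
      simp only [B, Finset.mem_sigma, A, F, Finset.mem_filter, Finset.mem_univ, true_and,
        Fintype.mem_piFinset, Φ]
      refine ⟨used_bound C, fun k m => ?_⟩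
      simp [used]⟩
  have hΨ : Function.Injective Ψ := by
    intro C D h
    apply hΦ
    simp only [Ψ, Subtype.mk.injEq, Sigma.mk.injEq, heq_eq_eq] at h
    exact Prod.ext h.1 h.2
  have h1 := Nat.card_le_card_of_injective Ψ hΨ
  refine h1.trans ?_
  rw [Nat.card_eq_fintype_card, Fintype.card_coe, Finset.card_sigma]
  have h2 : ∀ p ∈ A, (F p).card ≤ 4 ^ n := by
    intro p hp
    simp only [A, Finset.mem_filter, Finset.mem_univ, true_and] at hp
    simp only [F, Fintype.card_piFinset, Finset.prod_const, Finset.card_univ, Fintype.card_fin]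
    rw [Finset.prod_pow]
    exact Nat.pow_le_pow_left hp n
  refine (Finset.sum_le_card_nsmul A _ _ h2).trans ?_
  rw [smul_eq_mul]
  refine Nat.mul_le_mul_right _ ?_
  exact (Finset.card_filter_le _ _).trans param_card

lemma lower3 (n : ℕ) : 1 ≤ Nat.card ((H n).Coloring (Fin 3)) := by
  have : Nonempty ((H n).Coloring (Fin 3)) :=
    ⟨SimpleGraph.Coloring.mk labA fun h => h.1⟩
  exact Nat.card_pos

/-- Choice of a column for each vertex. -/
def col5 {n : ℕ} (b : Fin 5 × Fin n → Bool) : Vt n → Fin 5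
  | Sum.inl p => p.2
  | Sum.inr p => if b p = true then p.1 else p.1 + 1

lemma col5_mem {n : ℕ} (b : Fin 5 × Fin n → Bool) (v : Vt n) : col5 b v ∈ labB v := by
  rcases v with p | p
  · simp [col5, labB]
  · simp only [col5, labB, T]
    split_ifs <;> simp

lemma lower5 (n : ℕ) : 32 ^ n ≤ Nat.card ((H n).Coloring (Fin 5)) := by
  let Φ : (Fin 5 × Fin n → Bool) → (H n).Coloring (Fin 5) := fun b =>
    SimpleGraph.Coloring.mk (col5 b) fun {u v} h heq =>
      Finset.disjoint_left.1 h.2 (col5_mem b u) (heq ▸ col5_mem b v)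
  have hΦ : Function.Injective Φ := by
    intro b b' h
    funext p
    have h1 : col5 b (Sum.inr p) = col5 b' (Sum.inr p) := congrArg (fun C => C (Sum.inr p)) h
    simp only [col5] at h1
    have h2 : ∀ k : Fin 5, k ≠ k + 1 := by decide
    have h3 := h2 p.1
    cases hb : b p <;> cases hb' : b' p <;> simp_all
  have := Nat.card_le_card_of_injective Φ hΦ
  refine le_trans ?_ this
  simp [pow_mul]

/-- Cone over a graph. -/
def cone {V : Type} (G : SimpleGraph V) : SimpleGraph (Option V) where
  Adj u v := match u, v with
    | none, none => False
    | none, some _ => True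
    | some _, none => True
    | some a, some b => G.Adj a b
  symm := ⟨by
    rintro (_ | a) (_ | b) h
    · exact h
    · trivial
    · trivial
    · exact G.adj_symm h⟩
  loopless := ⟨by
    rintro (_ | a) h
    · exact h
    · exact G.loopless.irrefl a h⟩

/-- Colourings of the cone. -/
def coneEquiv {V : Type} (G : SimpleGraph V) (q : ℕ) :
    (cone G).Coloring (Fin (q + 1)) ≃ Fin (q + 1) × G.Coloring (Fin q) where
  toFun C := (C none, SimpleGraph.Coloring.mk
    (fun v => (finSuccAboveEquiv (C none)).symm
      ⟨C (some v), C.valid (v := some v) (w := none) trivial⟩)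
    (fun {u v} h heq => by
      have := (finSuccAboveEquiv (C none)).symm.injective heq
      simp only [Subtype.mk.injEq] at this
      exact C.valid (v := some u) (w := some v) h this))
  invFun p := SimpleGraph.Coloring.mk
    (fun o => match o with
      | none => p.1
      | some v => p.1.succAbove (p.2 v))
    (by
      rintro (_ | a) (_ | b) h
      · exact h.elim
      · exact (Fin.succAbove_ne _ _).symm
      · exact Fin.succAbove_ne _ _
      · exact fun he => p.2.valid h (Fin.succAbove_right_injective he))
  left_inv C := by
    apply DFunLike.ext
    rintro (_ | v)
    · rfl
    · have := (finSuccAboveEquiv (C none)).apply_symm_apply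
        ⟨C (some v), C.valid (v := some v) (w := none) trivial⟩
      exact congrArg Subtype.val this
  right_inv p := by
    refine Prod.ext rfl ?_
    apply DFunLike.ext
    intro v
    exact (finSuccAboveEquiv p.1).symm_apply_apply (p.2 v)

lemma cone_card {V : Type} (G : SimpleGraph V) (q : ℕ) :
    Nat.card ((cone G).Coloring (Fin (q + 1))) = (q + 1) * Nat.card (G.Coloring (Fin q)) := by
  rw [Nat.card_congr (coneEquiv G q), Nat.card_prod]; simp

lemma base : ∃ (N : ℕ) (V : Type) (_ : Fintype V) (G : SimpleGraph V), Fintype.card V = N ∧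
    5 * Nat.card (G.Coloring (Fin 4)) ^ 2 <
      4 * (Nat.card (G.Coloring (Fin 3)) * Nat.card (G.Coloring (Fin 5))) := by
  refine ⟨_, Vt 102, inferInstance, H 102, rfl, ?_⟩
  have h4 := upper 102
  have h3 := lower3 102
  have h5 := lower5 102
  calc _ ≤ 5 * (2 ^ 50 * 4 ^ 102) ^ 2 := by gcongr
    _ < 4 * (1 * 32 ^ 102) := by norm_num
    _ ≤ _ := by gcongr

lemma tower (N : ℕ) (V : Type) (hV : Fintype V) (G : SimpleGraph V) (hN : Fintype.card V = N)
    (hG : 5 * Nat.card (G.Coloring (Fin 4)) ^ 2 <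
      4 * (Nat.card (G.Coloring (Fin 3)) * Nat.card (G.Coloring (Fin 5)))) (m : ℕ) :
    ∃ (W : Type) (_ : Fintype W) (K : SimpleGraph W), Fintype.card W = N + m ∧
    (m + 5) * Nat.card (K.Coloring (Fin (m + 4))) ^ 2 <
      (m + 4) * (Nat.card (K.Coloring (Fin (m + 3))) * Nat.card (K.Coloring (Fin (m + 5)))) := by
  induction m with
  | zero => exact ⟨V, hV, G, hN, by simpa using hG⟩
  | succ m ih =>
    obtain ⟨W, hW, K, hc, h⟩ := ih
    refine ⟨Option W, inferInstance, cone K, by rw [Fintype.card_option, hc]; rfl, ?_⟩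
    have e3 := cone_card K (m + 3)
    have e4 := cone_card K (m + 4)
    have e5 := cone_card K (m + 5)
    rw [show m + 1 + 4 = m + 4 + 1 by ring, show m + 1 + 3 = m + 3 + 1 by ring,
      show m + 1 + 5 = m + 5 + 1 by ring, e3, e4, e5]
    have := Nat.mul_lt_mul_of_pos_left h (show 0 < (m + 5) * (m + 6) by positivity)
    nlinarith [this]

end LCC

/-- For every real constant `c < 1` there exist a finite simple graph `G` and a
natural number `q` with `q ≥ c·Δ(G) + 1` for which log-concavity fails:
`P_G(q-1) · P_G(q+1) > P_G(q)²`. Hence the constant `C` in "`P_G` is log-concave for all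
integers `q ≥ C·Δ(G) + 1`" cannot be taken smaller than `1`. -/
theorem log_concavity_constant_not_lt_one (c : ℝ) (hc : c < 1) :
    ∃ (V : Type) (hV : Fintype V) (G : SimpleGraph V) (hG : DecidableRel G.Adj) (q : ℕ),
      c * (@SimpleGraph.maxDegree V G hV hG : ℝ) + 1 ≤ (q : ℝ) ∧
      Nat.card (G.Coloring (Fin q)) ^ 2 <
        Nat.card (G.Coloring (Fin (q - 1))) * Nat.card (G.Coloring (Fin (q + 1))) := by
  classical
  obtain ⟨N, V, hV, G, hN, hG⟩ := LCC.base
  obtain ⟨m, hm⟩ := exists_nat_ge (max c 0 * N / (1 - max c 0))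
  obtain ⟨W, hW, K, hcard, h⟩ := LCC.tower N V hV G hN hG m
  refine ⟨W, hW, K, Classical.decRel _, m + 4, ?_, ?_⟩
  · have hc1 : max c 0 < 1 := max_lt hc one_pos
    have hc0 : 0 ≤ max c 0 := le_max_right _ _
    rw [div_le_iff₀ (by linarith)] at hm
    have hd : ∀ d : ℕ, d ≤ N + m → c * (d : ℝ) + 1 ≤ ((m + 4 : ℕ) : ℝ) := by
      intro d hd
      have hd' : (d : ℝ) ≤ N + m := by exact_mod_cast hd
      have h1 : c * (d : ℝ) ≤ max c 0 * (N + m) :=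
        mul_le_mul (le_max_left _ _) hd' (Nat.cast_nonneg _) hc0
      push_cast
      nlinarith
    apply hd
    rw [← hcard]
    apply SimpleGraph.maxDegree_le_of_forall_degree_le
    intro v
    exact (SimpleGraph.degree_lt_card_verts v).le
  · show _ < Nat.card (K.Coloring (Fin (m + 3))) * Nat.card (K.Coloring (Fin (m + 5)))
    nlinarith [h]
end
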